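/- Let F be a collection of finite sets, all of the same cardinality α. Then F is a maximal hke collection if and only if F is isomorphic to the typical collection for α. -/

import Mathlib

open Finset

/-- The union of a finite collection of finite sets. -/
def famUnion (Γ : Finset (Finset ℕ)) : Finset ℕ := Γ.sup id

/-- The intersection of a finite collection of finite sets
(equal to the usual intersection when the collection is nonempty). -/
def famInter (Γ : Finset (Finset ℕ)) : Finset ℕ :=
  (Γ.sup id).filter (fun x => ∀ A ∈ Γ, x ∈ A)

/-- `F` is a hereditary König–Egerváry (hke) collection with `α(F) = α`:
`α` is a positive integer and `|⋃Γ| + |⋂Γ| = 2α` for every nonempty subcollection `Γ` of `F`. -/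
def IsHKE (F : Finset (Finset ℕ)) (α : ℕ) : Prop :=
  0 < α ∧ ∀ Γ ⊆ F, Γ.Nonempty → (famUnion Γ).card + (famInter Γ).card = 2 * α

/-- `F` is a maximal hke collection: it is an hke collection and no collection
properly containing it is an hke collection. -/
def IsMaxHKE (F : Finset (Finset ℕ)) : Prop :=
  (∃ α, IsHKE F α) ∧ ∀ F' : Finset (Finset ℕ), F ⊂ F' → ¬ ∃ β, IsHKE F' β

/-- The typical collection for `α`: all subsets `S` of `{1, …, 2α}` such that
for every `i ∈ {1, …, α}`, `i ∈ S ↔ i + α ∉ S`. -/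
def typicalCollection (α : ℕ) : Finset (Finset ℕ) :=
  (Finset.Icc 1 (2 * α)).powerset.filter
    (fun S => ∀ i ∈ Finset.Icc 1 α, (i ∈ S ↔ i + α ∉ S))

/-- Two collections are isomorphic: there is a bijection `g : ⋃F₁ → ⋃F₂` such that
`g[S] ∈ F₂` for every `S ∈ F₁` and `g⁻¹[S] ∈ F₁` for every `S ∈ F₂`. -/
def CollIso (F₁ F₂ : Finset (Finset ℕ)) : Prop :=
  ∃ g : ℕ → ℕ, Set.BijOn g ↑(famUnion F₁) ↑(famUnion F₂) ∧
    (∀ S ∈ F₁, S.image g ∈ F₂) ∧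
    (∀ S ∈ F₂, (famUnion F₁).filter (fun x => g x ∈ S) ∈ F₁)


lemma mem_famUnion' (Γ : Finset (Finset ℕ)) (x : ℕ) : x ∈ famUnion Γ ↔ ∃ A ∈ Γ, x ∈ A := by
  simp [famUnion, Finset.mem_sup]

lemma mem_famInter' (Γ : Finset (Finset ℕ)) (h : Γ.Nonempty) (x : ℕ) :
    x ∈ famInter Γ ↔ ∀ A ∈ Γ, x ∈ A := by
  obtain ⟨B, hB⟩ := h
  have := mem_famUnion' Γ x
  unfold famUnion at this
  unfold famInter
  rw [Finset.mem_filter, this]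
  constructor
  · exact fun h => h.2
  · exact fun h => ⟨⟨B, hB, h B hB⟩, h⟩

/-- fixed-point-free involution on a finset -/
def InvOn' (U : Finset ℕ) (σ : ℕ → ℕ) : Prop :=
  ∀ x ∈ U, σ x ∈ U ∧ σ (σ x) = x ∧ σ x ≠ x

/-- the transversals -/
def transv (U : Finset ℕ) (σ : ℕ → ℕ) : Finset (Finset ℕ) :=
  U.powerset.filter (fun S => ∀ x ∈ U, (x ∈ S ↔ σ x ∉ S))

lemma mem_transv (U : Finset ℕ) (σ : ℕ → ℕ) (S : Finset ℕ) :
    S ∈ transv U σ ↔ S ⊆ U ∧ ∀ x ∈ U, (x ∈ S ↔ σ x ∉ S) := by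
  simp [transv]

lemma exists_transv {U : Finset ℕ} {σ : ℕ → ℕ} (h : InvOn' U σ) {x y : ℕ} (hx : x ∈ U)
    (hy : y ∈ U) (hxy : y ≠ σ x) : ∃ S ∈ transv U σ, x ∈ S ∧ y ∈ S := by
  refine ⟨U.filter (fun z => z = x ∨ z = y ∨ (z ≠ σ x ∧ z ≠ σ y ∧ z < σ z)), ?_, ?_, ?_⟩
  · rw [mem_transv]
    refine ⟨Finset.filter_subset _ _, fun z hz => ?_⟩
    obtain ⟨a1, a2, a3⟩ := h x hx
    obtain ⟨b1, b2, b3⟩ := h y hy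
    obtain ⟨c1, c2, c3⟩ := h z hz
    have e1 : σ z = x ↔ z = σ x := by constructor <;> intro h <;> grind
    have e2 : σ z = y ↔ z = σ y := by constructor <;> intro h <;> grind
    have e3 : σ z = σ x ↔ z = x := by constructor <;> intro h <;> grind
    have e4 : σ z = σ y ↔ z = y := by constructor <;> intro h <;> grind
    simp only [Finset.mem_filter, hz, c1, true_and, e1, e2, e3, e4, c2, ne_eq]
    have e5 : z < σ z ↔ ¬ σ z < z := by omega
    grind
  · simp [hx]
  · simp [hy]

lemma famUnion_transv {U : Finset ℕ} {σ : ℕ → ℕ} (h : InvOn' U σ) :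
    famUnion (transv U σ) = U := by
  ext x
  rw [mem_famUnion']
  constructor
  · rintro ⟨A, hA, hx⟩
    exact ((mem_transv _ _ _).1 hA).1 hx
  · intro hx
    obtain ⟨S, hS, h1, _⟩ := exists_transv h hx hx (h x hx).2.2.symm
    exact ⟨S, hS, h1⟩

lemma hke_transv {U : Finset ℕ} {σ : ℕ → ℕ} (h : InvOn' U σ) {α : ℕ} (hα : 0 < α)
    (hU : U.card = 2 * α) : IsHKE (transv U σ) α := by
  refine ⟨hα, fun Γ hΓ hne => ?_⟩
  have hsub : famUnion Γ ⊆ U := by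
    intro x hx
    obtain ⟨A, hA, hx⟩ := (mem_famUnion' _ _).1 hx
    exact ((mem_transv _ _ _).1 (hΓ hA)).1 hx
  have hm : ∀ A ∈ Γ, ∀ x ∈ U, (x ∈ A ↔ σ x ∉ A) := fun A hA =>
    ((mem_transv _ _ _).1 (hΓ hA)).2
  have hIU : ∀ x ∈ famInter Γ, x ∈ U := by
    intro x hx
    obtain ⟨A, hA⟩ := hne
    exact ((mem_transv _ _ _).1 (hΓ hA)).1 ((mem_famInter' _ ⟨A, hA⟩ _).1 hx A hA)
  have hc : (famInter Γ).card = (U \ famUnion Γ).card := by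
    refine Finset.card_bij' (fun x _ => σ x) (fun x _ => σ x) ?_ ?_ ?_ ?_
    · intro x hx
      have hxU := hIU x hx
      rw [mem_famInter' _ hne] at hx
      rw [Finset.mem_sdiff, mem_famUnion']
      refine ⟨(h x hxU).1, ?_⟩
      rintro ⟨A, hA, hxA⟩
      exact (hm A hA x hxU).1 (hx A hA) hxA
    · intro x hx
      rw [Finset.mem_sdiff, mem_famUnion'] at hx
      rw [mem_famInter' _ hne]
      intro A hA
      by_contra hc
      exact hx.2 ⟨A, hA, (hm A hA x hx.1).2 hc⟩
    · intro x hx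
      exact (h x (hIU x hx)).2.1
    · intro x hx
      exact (h x (Finset.mem_sdiff.1 hx).1).2.1
  rw [hc, ← hU]
  have := Finset.card_sdiff_add_card_eq_card hsub
  omega

lemma famUnion_singleton' (A : Finset ℕ) : famUnion {A} = A := by
  ext; simp [mem_famUnion']

lemma famInter_singleton' (A : Finset ℕ) : famInter {A} = A := by
  ext; simp [mem_famInter']

lemma hke_card {F : Finset (Finset ℕ)} {α : ℕ} (h : IsHKE F α) {A : Finset ℕ} (hA : A ∈ F) :
    A.card = α := by
  have := h.2 {A} (by simpa using hA) (by simp)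
  rw [famUnion_singleton', famInter_singleton'] at this
  omega

lemma max_transv {U : Finset ℕ} {σ : ℕ → ℕ} (h : InvOn' U σ) {α : ℕ} (hα : 0 < α)
    (hU : U.card = 2 * α) : IsMaxHKE (transv U σ) := by
  have hk := hke_transv h hα hU
  refine ⟨⟨α, hk⟩, ?_⟩
  rintro F' hF ⟨β, hβ⟩
  obtain ⟨u, hu⟩ : U.Nonempty := by
    rw [← Finset.card_pos]; omega
  obtain ⟨S0, hS0, -, -⟩ := exists_transv h hu hu (h u hu).2.2.symm
  have hab : β = α := by
    rw [← hke_card hβ (hF.1 hS0), hke_card hk hS0]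
  subst hab
  obtain ⟨S, hSF, hSn⟩ := Finset.exists_of_ssubset hF
  have hins : ∀ G ⊆ transv U σ, (famUnion (insert S G)).card + (famInter (insert S G)).card
      = 2 * β := fun G hG => hβ.2 _ (Finset.insert_subset hSF (hG.trans hF.1)) (by simp)
  have hsep : ∀ x ∈ U, ∀ y ∈ U, y ≠ x → ∃ T ∈ transv U σ, x ∈ T ∧ y ∉ T := by
    intro x hx y hy hxy
    obtain ⟨T, hT, h1, h2⟩ := exists_transv h hx (h y hy).1
      (fun e => hxy (by rw [← (h y hy).2.1, e, (h x hx).2.1]))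
    refine ⟨T, hT, h1, ?_⟩
    have := ((mem_transv _ _ _).1 hT).2 y hy
    tauto
  have hSU : S ⊆ U := by
    have h1 := hins _ (Finset.Subset.refl _)
    have h2 : famInter (insert S (transv U σ)) = ∅ := by
      ext x
      rw [mem_famInter' _ (by simp)]
      simp only [Finset.notMem_empty, iff_false]
      intro hx
      have hxU : x ∈ U := ((mem_transv _ _ _).1 hS0).1 (hx S0 (by simp [hS0]))
      obtain ⟨T, hT, -, h2⟩ := hsep (σ x) (h x hxU).1 x hxU (h x hxU).2.2.symm
      exact h2 (hx T (by simp [hT]))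
    have h3 : famUnion (insert S (transv U σ)) = S ∪ U := by
      conv_rhs => rw [← famUnion_transv h]
      ext x
      simp [mem_famUnion']
    rw [h2, h3, ← hU, Finset.card_empty, add_zero] at h1
    have := Finset.eq_of_subset_of_card_le (Finset.subset_union_right (s₁ := S) (s₂ := U)) h1.le
    rw [this]
    exact Finset.subset_union_left
  have : ∃ x ∈ U, ¬ (x ∈ S ↔ σ x ∉ S) := by
    by_contra hc
    push Not at hc
    refine hSn ((mem_transv _ _ _).2 ⟨hSU, fun x hx => ?_⟩)
    have := hc x hx
    tauto
  obtain ⟨x, hx, hxS⟩ := this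
  have hh := hins ((transv U σ).filter (fun T => x ∈ T)) (Finset.filter_subset _ _)
  by_cases hxx : x ∈ S
  · have hsx : σ x ∈ S := by tauto
    have e1 : famUnion (insert S ((transv U σ).filter (fun T => x ∈ T))) = U := by
      ext y
      rw [mem_famUnion']
      constructor
      · rintro ⟨A, hA, hy⟩
        rw [Finset.mem_insert, Finset.mem_filter, mem_transv] at hA
        rcases hA with rfl | hA
        · exact hSU hy
        · exact hA.1.1 hy
      · intro hy
        by_cases e : y = σ x
        · exact ⟨S, by simp, e ▸ hsx⟩
        · obtain ⟨T, hT, h1, h2⟩ := exists_transv h hx hy e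
          exact ⟨T, by simp [hT, h1], h2⟩
    have e2 : famInter (insert S ((transv U σ).filter (fun T => x ∈ T))) = {x} := by
      ext y
      rw [mem_famInter' _ (by simp), Finset.mem_singleton]
      constructor
      · intro hy
        by_contra hne
        have hyU := hSU (hy S (by simp))
        obtain ⟨T, hT, h1, h2⟩ := hsep x hx y hyU hne
        exact h2 (hy T (by simp [hT, h1]))
      · rintro rfl A hA
        rw [Finset.mem_insert, Finset.mem_filter] at hA
        rcases hA with rfl | hA
        · exact hxx
        · exact hA.2
    rw [e1, e2, Finset.card_singleton] at hh
    omega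
  · have hsx : σ x ∉ S := by tauto
    have e1 : famUnion (insert S ((transv U σ).filter (fun T => x ∈ T))) = U.erase (σ x) := by
      ext y
      rw [mem_famUnion', Finset.mem_erase]
      constructor
      · rintro ⟨A, hA, hy⟩
        rw [Finset.mem_insert, Finset.mem_filter, mem_transv] at hA
        rcases hA with rfl | hA
        · exact ⟨fun e => hsx (e ▸ hy), hSU hy⟩
        · exact ⟨fun e => (hA.1.2 x hx).1 hA.2 (e ▸ hy), hA.1.1 hy⟩
      · rintro ⟨e, hy⟩
        obtain ⟨T, hT, h1, h2⟩ := exists_transv h hx hy e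
        exact ⟨T, by simp [hT, h1], h2⟩
    have e2 : famInter (insert S ((transv U σ).filter (fun T => x ∈ T))) = ∅ := by
      ext y
      rw [mem_famInter' _ (by simp)]
      simp only [Finset.notMem_empty, iff_false]
      intro hy
      have hyS := hy S (by simp)
      obtain ⟨T, hT, h1, h2⟩ := hsep x hx y (hSU hyS) (fun e => hxx (e ▸ hyS))
      exact h2 (hy T (by simp [hT, h1]))
    rw [e1, e2, Finset.card_empty, Finset.card_erase_of_mem (h x hx).1] at hh
    omega

/-- pairing on the typical ground set -/
def tau (α : ℕ) (i : ℕ) : ℕ := if i ≤ α then i + α else i - α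

lemma tau_inv (α : ℕ) : InvOn' (Finset.Icc 1 (2 * α)) (tau α) := by
  intro x hx
  rw [Finset.mem_Icc] at *
  unfold tau
  grind

lemma typical_eq (α : ℕ) : typicalCollection α = transv (Finset.Icc 1 (2 * α)) (tau α) := by
  ext S
  rw [mem_transv]
  simp only [typicalCollection, Finset.mem_filter, Finset.mem_powerset]
  refine and_congr_right fun hS => ?_
  constructor
  · intro h x hx
    rw [Finset.mem_Icc] at hx
    unfold tau
    split_ifs with hxa
    · exact h x (by rw [Finset.mem_Icc]; omega)
    · have := h (x - α) (by rw [Finset.mem_Icc]; omega)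
      rw [show x - α + α = x by omega] at this
      tauto
  · intro h x hx
    rw [Finset.mem_Icc] at hx
    have := h x (by rw [Finset.mem_Icc]; omega)
    unfold tau at this
    rwa [if_pos hx.2] at this

lemma iso_of_equivariant {U V : Finset ℕ} {σ τ : ℕ → ℕ} (hU : InvOn' U σ) (hV : InvOn' V τ)
    (g : ℕ → ℕ) (hg : Set.BijOn g U V) (hgs : ∀ x ∈ U, g (σ x) = τ (g x)) :
    CollIso (transv U σ) (transv V τ) := by
  refine ⟨g, ?_, ?_, ?_⟩
  · rw [famUnion_transv hU, famUnion_transv hV]; exact hg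
  · intro S hS
    rw [mem_transv] at *
    have key : ∀ x ∈ U, (g x ∈ S.image g ↔ x ∈ S) := by
      intro x hx
      rw [Finset.mem_image]
      constructor
      · rintro ⟨y, hy, e⟩
        rwa [← hg.injOn (hS.1 hy) hx e]
      · exact fun h => ⟨x, h, rfl⟩
    refine ⟨?_, ?_⟩
    · intro y hy
      obtain ⟨x, hx, rfl⟩ := Finset.mem_image.1 hy
      exact hg.mapsTo (hS.1 hx)
    · intro y hy
      obtain ⟨x, hx, rfl⟩ := hg.surjOn hy
      rw [← hgs x hx, key x hx, key _ (hU x hx).1]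
      exact hS.2 x hx
  · intro S hS
    rw [famUnion_transv hU]
    rw [mem_transv] at *
    refine ⟨Finset.filter_subset _ _, fun x hx => ?_⟩
    have hx' := (hU x hx).1
    simp only [Finset.mem_filter, hx, hx', true_and, hgs x hx]
    exact hS.2 _ (hg.mapsTo hx)

lemma eq_transv_of_iso {F : Finset (Finset ℕ)} {V : Finset ℕ} {τ : ℕ → ℕ} (hV : InvOn' V τ)
    (hF : CollIso F (transv V τ)) :
    ∃ U σ, InvOn' U σ ∧ U.card = V.card ∧ F = transv U σ := by
  obtain ⟨g, hg, h1, h2⟩ := hF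
  rw [famUnion_transv hV] at hg
  set U := famUnion F with hUdef
  have hFU : ∀ S ∈ F, S ⊆ U := fun S hS x hx => (mem_famUnion' _ _).2 ⟨S, hS, hx⟩
  have hk : ∀ y ∈ V, ∃ x ∈ U, g x = y := fun y hy => hg.surjOn hy
  choose! k hkU hgk using hk
  have hgV : ∀ x ∈ U, g x ∈ V := fun x hx => hg.mapsTo hx
  have hkg : ∀ x ∈ U, k (g x) = x := fun x hx =>
    hg.injOn (hkU _ (hgV x hx)) hx (hgk _ (hgV x hx))
  have hgs : ∀ x ∈ U, g (k (τ (g x))) = τ (g x) := fun x hx => hgk _ (hV _ (hgV x hx)).1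
  have hsU : ∀ x ∈ U, k (τ (g x)) ∈ U := fun x hx => hkU _ (hV _ (hgV x hx)).1
  have key : ∀ S ⊆ U, ∀ x ∈ U, (g x ∈ S.image g ↔ x ∈ S) := by
    intro S hS x hx
    rw [Finset.mem_image]
    constructor
    · rintro ⟨y, hy, e⟩
      rwa [← hg.injOn (hS hy) hx e]
    · exact fun h => ⟨x, h, rfl⟩
  refine ⟨U, fun x => k (τ (g x)), ?_, ?_, ?_⟩
  · intro x hx
    refine ⟨hsU x hx, ?_, ?_⟩
    · simp only
      rw [hgs x hx, (hV _ (hgV x hx)).2.1, hkg x hx]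
    · intro e
      have := hgs x hx
      simp only at e
      rw [e] at this
      exact (hV _ (hgV x hx)).2.2 this.symm
  · exact Finset.card_bij (fun x _ => g x) (fun x hx => hgV x hx)
      (fun x hx y hy e => hg.injOn hx hy e) (fun y hy => ⟨k y, hkU y hy, hgk y hy⟩)
  · ext S
    rw [mem_transv]
    constructor
    · intro hS
      refine ⟨hFU S hS, fun x hx => ?_⟩
      have := ((mem_transv _ _ _).1 (h1 S hS)).2 (g x) (hgV x hx)
      rwa [← hgs x hx, key S (hFU S hS) x hx, key S (hFU S hS) _ (hsU x hx)] at this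
    · rintro ⟨hS, h⟩
      have hmem : S.image g ∈ transv V τ := by
        rw [mem_transv]
        refine ⟨?_, ?_⟩
        · intro y hy
          obtain ⟨x, hx, rfl⟩ := Finset.mem_image.1 hy
          exact hgV x (hS hx)
        · intro y hy
          obtain ⟨x, hx, rfl⟩ := hg.surjOn hy
          rw [← hgs x hx, key S hS x hx, key S hS _ (hsU x hx)]
          exact h x hx
      have := h2 _ hmem
      convert this using 1
      ext x
      rw [Finset.mem_filter]
      constructor
      · exact fun hx => ⟨hS hx, (key S hS x (hS hx)).2 hx⟩
      · exact fun hx => (key S hS x hx.1).1 hx.2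

lemma transv_iso_typical {U : Finset ℕ} {σ : ℕ → ℕ} (h : InvOn' U σ) {α : ℕ}
    (hU : U.card = 2 * α) {A : Finset ℕ} (hA : A ∈ transv U σ) (hAc : A.card = α) :
    CollIso (transv U σ) (typicalCollection α) := by
  rw [typical_eq]
  obtain ⟨e⟩ : Nonempty (A ≃ Finset.Icc 1 α) := by
    refine ⟨Fintype.equivOfCardEq ?_⟩
    simp [hAc]
  rw [mem_transv] at hA
  let f : ℕ → ℕ := fun x => if hx : x ∈ A then (e ⟨x, hx⟩ : ℕ) else 0
  have hf1 : ∀ x ∈ A, 1 ≤ f x ∧ f x ≤ α := by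
    intro x hx
    have := (e ⟨x, hx⟩).2
    rw [Finset.mem_Icc] at this
    simpa only [f, dif_pos hx] using this
  have hfi : ∀ x ∈ A, ∀ y ∈ A, f x = f y → x = y := by
    intro x hx y hy hxy
    simp only [f, dif_pos hx, dif_pos hy] at hxy
    have := e.injective (Subtype.ext hxy)
    simpa using this
  let g : ℕ → ℕ := fun x => if x ∈ A then f x else f (σ x) + α
  have hsA : ∀ x ∈ U, x ∉ A → σ x ∈ A := by
    intro x hx hxA
    have := hA.2 x hx
    tauto
  have hmaps : ∀ x ∈ U, g x ∈ Finset.Icc 1 (2 * α) := by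
    intro x hx
    rw [Finset.mem_Icc]
    by_cases hxA : x ∈ A
    · simp only [g, if_pos hxA]
      have := hf1 x hxA
      omega
    · simp only [g, if_neg hxA]
      have := hf1 _ (hsA x hx hxA)
      omega
  have hinj : ∀ x ∈ U, ∀ y ∈ U, g x = g y → x = y := by
    intro x hx y hy hxy
    by_cases hxA : x ∈ A <;> by_cases hyA : y ∈ A <;> simp only [g, hxA, hyA, if_true, if_false] at hxy
    · exact hfi x hxA y hyA hxy
    · have := hf1 _ (hsA y hy hyA)
      have := hf1 _ hxA
      omega
    · have := hf1 _ (hsA x hx hxA)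
      have := hf1 _ hyA
      omega
    · have := hfi _ (hsA x hx hxA) _ (hsA y hy hyA) (by omega)
      rw [← (h x hx).2.1, this, (h y hy).2.1]
  refine iso_of_equivariant h (tau_inv α) g ⟨hmaps, fun x hx y hy => hinj x hx y hy, ?_⟩ ?_
  · exact Finset.surjOn_of_injOn_of_card_le g hmaps (fun x hx y hy => hinj x hx y hy)
      (by simp [hU])
  · intro x hx
    by_cases hxA : x ∈ A
    · have h2 : σ x ∉ A := (hA.2 x hx).1 hxA
      simp only [g, hxA, h2, if_true, if_false, (h x hx).2.1, tau, (hf1 x hxA).2]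
    · have h2 : σ x ∈ A := hsA x hx hxA
      have := hf1 _ h2
      simp only [g, hxA, h2, if_true, if_false, tau]
      rw [if_neg (by omega)]
      omega

lemma exists_equiv_fiber {τ : Type*} [DecidableEq τ] (X Y : Finset ℕ) (f k : ℕ → τ)
    (h : ∀ T, (X.filter (fun x => f x = T)).card = (Y.filter (fun x => k x = T)).card) :
    ∃ e : X ≃ Y, ∀ x, k (e x) = f x := by
  have hc : ∀ (Z : Finset ℕ) (p : ℕ → τ) (T : τ),
      Fintype.card {a : Z // p a = T} = (Z.filter (fun x => p x = T)).card := by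
    intro Z p T
    rw [← Fintype.card_coe]
    refine Fintype.card_congr ⟨fun a => ⟨a.1.1, by simp [a.1.2, a.2]⟩,
      fun a => ⟨⟨a.1, (Finset.mem_filter.1 a.2).1⟩, (Finset.mem_filter.1 a.2).2⟩,
      fun a => rfl, fun a => rfl⟩
  have e : ∀ T, {a : X // (fun a : X => f a) a = T} ≃ {a : Y // (fun a : Y => k a) a = T} :=
    fun T => Fintype.equivOfCardEq (by rw [hc X f T, hc Y k T, h T])
  exact ⟨Equiv.ofFiberEquiv e, fun x => Equiv.ofFiberEquiv_map e x⟩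

lemma hke_embed {F : Finset (Finset ℕ)} {α : ℕ} (hF : IsHKE F α) {A : Finset ℕ} (hA : A ∈ F) :
    ∃ U σ, InvOn' U σ ∧ U.card = 2 * α ∧ F ⊆ transv U σ := by
  obtain ⟨U, hUF, hUc⟩ := Infinite.exists_superset_card_eq (famUnion F) (2 * α) (by
    have := hF.2 F (Finset.Subset.refl _) ⟨A, hA⟩
    omega)
  have hFU : ∀ S ∈ F, S ⊆ U := fun S hS x hx => hUF ((mem_famUnion' _ _).2 ⟨S, hS, hx⟩)
  have c1 : ∀ Γ ⊆ F, (U.filter (fun x => ∀ B ∈ Γ, x ∈ B)).card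
      = (U.filter (fun x => ∀ B ∈ Γ, x ∉ B)).card := by
    intro Γ hΓ
    rcases Γ.eq_empty_or_nonempty with rfl | hne
    · simp
    have h1 : U.filter (fun x => ∀ B ∈ Γ, x ∈ B) = famInter Γ := by
      ext x
      rw [mem_famInter' _ hne, Finset.mem_filter]
      obtain ⟨B, hB⟩ := hne
      exact ⟨fun h => h.2, fun h => ⟨hFU B (hΓ hB) (h B hB), h⟩⟩
    have h2 : U.filter (fun x => ∀ B ∈ Γ, x ∉ B) = U \ famUnion Γ := by
      ext x
      simp [mem_famUnion']
    have h3 : famUnion Γ ⊆ U := by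
      intro x hx
      obtain ⟨B, hB, hx⟩ := (mem_famUnion' _ _).1 hx
      exact hFU B (hΓ hB) hx
    have := Finset.card_sdiff_add_card_eq_card h3
    have := hF.2 Γ hΓ hne
    rw [h1, h2]
    omega
  have c2 : ∀ Δ ⊆ F, ∀ Γ ⊆ F,
      (U.filter (fun x => (∀ B ∈ Γ, x ∈ B) ∧ ∀ B ∈ Δ, x ∉ B)).card
      = (U.filter (fun x => (∀ B ∈ Γ, x ∉ B) ∧ ∀ B ∈ Δ, x ∈ B)).card := by
    intro Δ
    induction Δ using Finset.induction_on with
    | empty => intro _ Γ hΓ; simpa using c1 Γ hΓ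
    | insert C Δ hC ih =>
      intro hΔ Γ hΓ
      rw [Finset.insert_subset_iff] at hΔ
      have i1 := ih hΔ.2 Γ hΓ
      have i2 := ih hΔ.2 (insert C Γ) (Finset.insert_subset hΔ.1 hΓ)
      have j1 := Finset.card_filter_add_card_filter_not
        (s := U.filter (fun x => (∀ B ∈ Γ, x ∈ B) ∧ ∀ B ∈ Δ, x ∉ B)) (fun x => x ∈ C)
      have j2 := Finset.card_filter_add_card_filter_not
        (s := U.filter (fun x => (∀ B ∈ Γ, x ∉ B) ∧ ∀ B ∈ Δ, x ∈ B)) (fun x => x ∉ C)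
      rw [Finset.filter_filter, Finset.filter_filter] at j1 j2
      have k1 : U.filter (fun x => (∀ B ∈ insert C Γ, x ∈ B) ∧ ∀ B ∈ Δ, x ∉ B) =
          U.filter (fun x => ((∀ B ∈ Γ, x ∈ B) ∧ ∀ B ∈ Δ, x ∉ B) ∧ x ∈ C) := by
        apply Finset.filter_congr; intro x _; rw [Finset.forall_mem_insert]; tauto
      have k2 : U.filter (fun x => (∀ B ∈ insert C Γ, x ∉ B) ∧ ∀ B ∈ Δ, x ∈ B) =
          U.filter (fun x => ((∀ B ∈ Γ, x ∉ B) ∧ ∀ B ∈ Δ, x ∈ B) ∧ x ∉ C) := by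
        apply Finset.filter_congr; intro x _; rw [Finset.forall_mem_insert]; tauto
      have k3 : U.filter (fun x => (∀ B ∈ Γ, x ∈ B) ∧ ∀ B ∈ insert C Δ, x ∉ B) =
          U.filter (fun x => ((∀ B ∈ Γ, x ∈ B) ∧ ∀ B ∈ Δ, x ∉ B) ∧ ¬ x ∈ C) := by
        apply Finset.filter_congr; intro x _; rw [Finset.forall_mem_insert]; tauto
      have k4 : U.filter (fun x => (∀ B ∈ Γ, x ∉ B) ∧ ∀ B ∈ insert C Δ, x ∈ B) =
          U.filter (fun x => ((∀ B ∈ Γ, x ∉ B) ∧ ∀ B ∈ Δ, x ∈ B) ∧ ¬ x ∉ C) := by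
        apply Finset.filter_congr; intro x _; rw [Finset.forall_mem_insert]; tauto
      rw [k1, k2] at i2
      rw [k3, k4]
      omega
  obtain ⟨e, he⟩ := exists_equiv_fiber A (U \ A) (fun x => F.filter (fun B => x ∈ B))
    (fun x => F.filter (fun B => x ∉ B)) (by
      intro T
      by_cases hT : T ⊆ F ∧ A ∈ T
      · have := c2 (F \ T) Finset.sdiff_subset T hT.1
        convert this using 2
        · ext x
          simp only [Finset.mem_filter, Finset.ext_iff, Finset.mem_sdiff]
          constructor
          · rintro ⟨hx, h⟩
            exact ⟨hFU A hA hx, fun B hB => ((h B).2 hB).2,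
              fun B hB hxB => hB.2 ((h B).1 ⟨hB.1, hxB⟩)⟩
          · rintro ⟨hx, h1, h2⟩
            refine ⟨h1 A hT.2, fun B => ⟨fun h => ?_, fun h => ⟨hT.1 h, h1 B h⟩⟩⟩
            by_contra hn
            exact h2 B ⟨h.1, hn⟩ h.2
        · ext x
          simp only [Finset.mem_filter, Finset.ext_iff, Finset.mem_sdiff]
          constructor
          · rintro ⟨hx, h⟩
            refine ⟨hx.1, fun B hB => ((h B).2 hB).2, fun B hB => ?_⟩
            by_contra hxB
            exact hB.2 ((h B).1 ⟨hB.1, hxB⟩)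
          · rintro ⟨hx, h1, h2⟩
            refine ⟨⟨hx, h1 A hT.2⟩, fun B => ⟨fun h => ?_, fun h => ⟨hT.1 h, h1 B h⟩⟩⟩
            by_contra hn
            exact h.2 (h2 B ⟨h.1, hn⟩)
      · rw [Finset.filter_eq_empty_iff.2, Finset.filter_eq_empty_iff.2]
        · rintro x hx rfl
          rw [Finset.mem_sdiff] at hx
          exact hT ⟨Finset.filter_subset _ _, by simp [hA, hx.2]⟩
        · rintro x hx rfl
          exact hT ⟨Finset.filter_subset _ _, by simp [hA, hx]⟩)
  let σ : ℕ → ℕ := fun x => if hx : x ∈ A then (e ⟨x, hx⟩ : ℕ) else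
    if hx' : x ∈ U \ A then (e.symm ⟨x, hx'⟩ : ℕ) else 0
  have s1 : ∀ a : A, σ a = e a := by
    intro a
    simp only [σ, dif_pos a.2]
  have s2 : ∀ b : (U \ A : Finset ℕ), σ b = e.symm b := by
    intro b
    have hb := (Finset.mem_sdiff.1 b.2).2
    simp only [σ, dif_neg hb, dif_pos b.2]
  have he' : ∀ a : A, ∀ B ∈ F, ((a : ℕ) ∈ B ↔ (e a : ℕ) ∉ B) := by
    intro a B hB
    have := Finset.ext_iff.1 (he a) B
    simp only [Finset.mem_filter, hB, true_and] at this
    exact this.symm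
  have hcase : ∀ x ∈ U, (∃ a : A, x = a) ∨ (∃ a : A, x = e a) := by
    intro x hx
    by_cases hxA : x ∈ A
    · exact Or.inl ⟨⟨x, hxA⟩, rfl⟩
    · exact Or.inr ⟨e.symm ⟨x, by simp [hx, hxA]⟩, by simp⟩
  have s3 : ∀ a : A, σ (e a) = a := by
    intro a; rw [s2]; simp
  refine ⟨U, σ, ?_, hUc, ?_⟩
  · intro x hx
    rcases hcase x hx with ⟨a, rfl⟩ | ⟨a, rfl⟩
    · rw [s1, s3]
      have := Finset.mem_sdiff.1 (e a).2
      exact ⟨this.1, rfl, fun h => this.2 (h ▸ a.2)⟩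
    · rw [s3, s1]
      have := Finset.mem_sdiff.1 (e a).2
      exact ⟨hFU A hA a.2, rfl, fun h => this.2 (h ▸ a.2)⟩
  · intro S hS
    rw [mem_transv]
    refine ⟨hFU S hS, fun x hx => ?_⟩
    rcases hcase x hx with ⟨a, rfl⟩ | ⟨a, rfl⟩
    · rw [s1]; exact he' a S hS
    · rw [s3]; have := he' a S hS; tauto

/-- a collection `F` of finite sets, all of cardinality `α`, is a maximal hke
collection iff `F` is isomorphic to the typical collection for `α`. -/
theorem isMaxHKE_iff_iso_typical (F : Finset (Finset ℕ)) (α : ℕ) (hα : 0 < α)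
    (hcard : ∀ A ∈ F, A.card = α) :
    IsMaxHKE F ↔ CollIso F (typicalCollection α) := by
  constructor
  · rintro ⟨⟨β, hβ⟩, hmax⟩
    rcases F.eq_empty_or_nonempty with rfl | ⟨A, hA⟩
    · exfalso
      have hk := hke_transv (tau_inv α) hα (by simp)
      have h1 : (1 : ℕ) ∈ Finset.Icc 1 (2 * α) := by rw [Finset.mem_Icc]; omega
      obtain ⟨S, hS, -, -⟩ := exists_transv (tau_inv α) h1 h1 (tau_inv α 1 h1).2.2.symm
      exact hmax _ (Finset.empty_ssubset.2 ⟨S, hS⟩) ⟨α, hk⟩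
    · have hab : β = α := by rw [← hke_card hβ hA, hcard A hA]
      subst hab
      obtain ⟨U, σ, hU, hUc, hFU⟩ := hke_embed hβ hA
      have hFe : F = transv U σ := by
        by_contra hne
        exact hmax _ (Finset.ssubset_iff_subset_ne.2 ⟨hFU, hne⟩) ⟨β, hke_transv hU hα hUc⟩
      rw [hFe]
      exact transv_iso_typical hU hUc (hFU hA) (hcard A hA)
  · intro h
    rw [typical_eq] at h
    obtain ⟨U, σ, hU, hUc, rfl⟩ := eq_transv_of_iso (tau_inv α) h
    exact max_transv hU hα (by rw [hUc]; simp)
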